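/- Let K be a totally real number field of degree n with distinct embeddings σ_1, …, σ_n : K → ℂ, and let U = {ε ∈ 𝓞_K^× : ∏_{i=1}^n σ_i(ε) = 1} be the group of units of norm 1. Let σ : K → ℂ^n be the map x ↦ (σ_1(x), …, σ_n(x)). Then σ(U) is Zariski dense in W = {x ∈ ℂ^n : ∏_{i=1}^n x_i = 1}: for every polynomial f ∈ ℂ[X_1, …, X_n], if f(σ(ε)) = 0 for all ε ∈ U, then f(x) = 0 for all x ∈ ℂ^n with ∏_{i=1}^n x_i = 1. -/

import Mathlib

open NumberField

section aux
variable {K : Type*} [Field K] [NumberField K] {n : ℕ} (σ : Fin n → (K →+* ℂ))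

theorem uzd_prod_sq (hσ : Function.Bijective σ) (u : (𝓞 K)ˣ) :
    (∏ i, σ i ((u : 𝓞 K) : K)) ^ 2 = 1 := by
  have h1 : (∏ i, σ i ((u : 𝓞 K) : K)) =
      algebraMap ℚ ℂ (Algebra.norm ℚ ((u : 𝓞 K) : K)) := by
    rw [Algebra.norm_eq_prod_embeddings ℚ ℂ]
    exact Fintype.prod_bijective _
      ((RingHom.equivRatAlgHom K ℂ).bijective.comp hσ) _ _ (fun _ => by
        simp [RingHom.equivRatAlgHom_apply])
  have h2 := NumberField.Units.norm K u
  rw [h1, ← map_pow, ← sq_abs, h2]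
  simp

noncomputable def uzdChar (m : Fin n →₀ ℕ) : (𝓞 K)ˣ →* ℂ where
  toFun u := ∏ i, (σ i ((u : 𝓞 K) : K) ^ 2) ^ m i
  map_one' := by simp
  map_mul' a b := by simp [mul_pow, Finset.prod_mul_distrib]

theorem uzd_sub (hσ : Function.Bijective σ)
    (hreal : ∀ φ : K →+* ℂ, ∀ x : K, (φ x).im = 0) (hn : 0 < n)
    (m m' : Fin n →₀ ℕ) (h : uzdChar σ m = uzdChar σ m') :
    ∃ c c' : ℕ, ∀ i, m i + c = m' i + c' := by
  have : Nonempty (Fin n) := ⟨⟨0, hn⟩⟩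
  obtain ⟨j, hj⟩ := Finite.exists_max (fun i => (m i : ℝ) - m' i)
  obtain ⟨u, hu⟩ := NumberField.Units.dirichletUnitTheorem.exists_unit K (InfinitePlace.mk (σ j))
  have hu' : ∀ i, i ≠ j → Real.log ‖σ i ((u : 𝓞 K) : K)‖ < 0 := by
    intro i hi
    have := hu (InfinitePlace.mk (σ i)) (by
      intro he
      rw [InfinitePlace.mk_eq_iff] at he
      have hc : ComplexEmbedding.conjugate (σ i) = σ i := by
        ext x
        rw [ComplexEmbedding.conjugate_coe_eq]
        exact Complex.conj_eq_iff_im.2 (hreal _ _)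
      rw [hc, or_self] at he
      exact hi (hσ.1 he))
    simpa using this
  have hne : ∀ i, σ i ((u : 𝓞 K) : K) ≠ 0 := fun i => by simp
  set l : Fin n → ℝ := fun i => Real.log ‖σ i ((u : 𝓞 K) : K)‖ with hl
  have hs : ∑ i, l i = 0 := by
    have := congrArg (fun z : ℂ => Real.log ‖z‖) (uzd_prod_sq σ hσ u)
    simp only [norm_pow, norm_prod, Real.log_pow, norm_one, Real.log_one] at this
    rw [Real.log_prod (fun i _ => norm_ne_zero_iff.2 (hne i))] at this
    simpa using this
  have hlog : ∀ m : Fin n →₀ ℕ, Real.log ‖uzdChar σ m u‖ = 2 * ∑ i, (m i : ℝ) * l i := by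
    intro m
    change Real.log ‖∏ i, (σ i ((u : 𝓞 K) : K) ^ 2) ^ m i‖ = _
    rw [norm_prod, Real.log_prod (fun i _ => norm_ne_zero_iff.2 (pow_ne_zero _ (pow_ne_zero _ (hne i)))),
      Finset.mul_sum]
    refine Finset.sum_congr rfl fun i _ => ?_
    rw [norm_pow, norm_pow, Real.log_pow, Real.log_pow]
    push_cast
    ring
  have h0 : ∑ i, (m i : ℝ) * l i = ∑ i, (m' i : ℝ) * l i := by
    have := hlog m
    rw [h, hlog m'] at this
    linarith
  have h1 : ∑ i, ((m i : ℝ) - m' i - (m j - m' j)) * l i = 0 := by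
    simp only [sub_mul, Finset.sum_sub_distrib, ← Finset.mul_sum, hs, h0]
    ring
  have hlj : ∀ i, 0 ≤ ((m i : ℝ) - m' i - (m j - m' j)) * l i := by
    intro i
    by_cases hi : i = j
    · subst hi; simp
    · exact mul_nonneg_of_nonpos_of_nonpos (sub_nonpos.2 (hj i)) (hu' i hi).le
  rw [Finset.sum_eq_zero_iff_of_nonneg (fun i _ => hlj i)] at h1
  refine ⟨m' j, m j, fun i => ?_⟩
  by_cases hi : i = j
  · subst hi; exact add_comm _ _
  · have := (mul_eq_zero.1 (h1 i (Finset.mem_univ _))).resolve_right (hu' i hi).ne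
    have h3 : (m i : ℝ) + m' j = m' i + m j := by linarith
    exact_mod_cast h3

end aux

/-- Zariski density of the norm-one units of a totally real number field in the
hypersurface `W = {x ∈ ℂⁿ : x₁⋯xₙ = 1}`: any polynomial vanishing on the image of the
norm-one unit group under the embedding `x ↦ (σ₁(x), …, σₙ(x))` vanishes on all of
`W`. -/
theorem units_zariski_dense {K : Type*} [Field K] [NumberField K] (n : ℕ)
    (hn : Module.finrank ℚ K = n)
    (σ : Fin n → (K →+* ℂ)) (hσ : Function.Bijective σ)
    (hreal : ∀ φ : K →+* ℂ, ∀ x : K, (φ x).im = 0)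
    (f : MvPolynomial (Fin n) ℂ)
    (hf : ∀ ε : (𝓞 K)ˣ, (∏ i, σ i ((ε : 𝓞 K) : K)) = 1 →
      MvPolynomial.eval (fun i => σ i ((ε : 𝓞 K) : K)) f = 0) :
    ∀ x : Fin n → ℂ, (∏ i, x i) = 1 → MvPolynomial.eval x f = 0 := by
  classical
  intro x hx
  have hpos : 0 < n := hn ▸ Module.finrank_pos
  set S := f.support.image (uzdChar σ) with hS
  have hmap : ∀ m ∈ f.support, uzdChar σ m ∈ S := fun m hm => Finset.mem_image_of_mem _ hm
  have key : ∀ χ ∈ S, ∑ m ∈ f.support with uzdChar σ m = χ, f.coeff m = 0 := by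
    refine linearIndependent_iff'.1 (linearIndependent_monoidHom (𝓞 K)ˣ ℂ) S
      (fun χ => ∑ m ∈ f.support with uzdChar σ m = χ, f.coeff m) ?_
    funext u
    have h1 := hf (u ^ 2) (by
      have := uzd_prod_sq σ hσ u
      simpa [Finset.prod_pow] using this)
    rw [MvPolynomial.eval_eq', ← Finset.sum_fiberwise_of_maps_to hmap] at h1
    rw [Finset.sum_apply, Pi.zero_apply, ← h1]
    refine Finset.sum_congr rfl fun χ _ => ?_
    rw [Pi.smul_apply, smul_eq_mul, Finset.sum_mul]
    refine Finset.sum_congr rfl fun m hm => ?_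
    rw [← (Finset.mem_filter.1 hm).2]
    simp [uzdChar]
  rw [MvPolynomial.eval_eq', ← Finset.sum_fiberwise_of_maps_to hmap]
  refine Finset.sum_eq_zero fun χ hχ => ?_
  obtain ⟨m₀, -, rfl⟩ := Finset.mem_image.1 hχ
  have : ∀ m ∈ f.support.filter (fun m => uzdChar σ m = uzdChar σ m₀),
      f.coeff m * ∏ i, x i ^ m i = f.coeff m * ∏ i, x i ^ m₀ i := by
    intro m hm
    obtain ⟨c, c', hc⟩ := uzd_sub σ hσ hreal hpos m m₀ (Finset.mem_filter.1 hm).2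
    have e : ∏ i, x i ^ (m i + c) = ∏ i, x i ^ (m₀ i + c') :=
      Finset.prod_congr rfl fun i _ => by rw [hc i]
    simp only [pow_add, Finset.prod_mul_distrib, Finset.prod_pow, hx, one_pow, mul_one] at e
    rw [e]
  rw [Finset.sum_congr rfl this, ← Finset.sum_mul, key _ hχ, zero_mul]
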